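/- Let d = 4 and assume s ≥ 7 (where Q(s) = kγ). Then: (1) for every λ ∈ (0,1) there exist a, b, c > 0 such that Ψ(ω, λ, a, b, c) ≤ 4^{1−2γ} for every ω ∈ (0,1); (2) for every ε > 0 there exists δ > 0 such that for every λ ∈ (0,1) with |λ − 3/4| ≥ ε, the reals a, b, c > 0 can be chosen so that Ψ(ω, λ, a, b, c) ≤ 4^{1−2γ} − δ for every ω ∈ (0,1). -/

import Mathlib

/-- `q(x) = exp(x) - x - 1`. -/
noncomputable def q (x : ℝ) : ℝ := Real.exp x - x - 1

/-- `Q(x) = x·(exp(x) − 1)/(exp(x) − x − 1)`. -/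
noncomputable def Qf (x : ℝ) : ℝ := x * (Real.exp x - 1) / (Real.exp x - x - 1)

/-- The generating polynomial `p(z) = (1/d)·((1+z)^k + (d−1)·(1 − z/(d−1))^k)`. -/
noncomputable def pgen (d k : ℕ) (z : ℝ) : ℝ :=
  (1/(d:ℝ)) * ((1+z)^k + ((d:ℝ)-1) * (1 - z/((d:ℝ)-1))^k)

/-- `Ψ(ω,λ,x,y,z)` for the uniquely extendible case. -/
noncomputable def Psi (d k : ℕ) (γ s ω lam x y z : ℝ) : ℝ :=
  (((d:ℝ)-1) * q x / (q s * ω)) ^ ω *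
  (q y / (q s * (1-ω))) ^ (1-ω) *
  (lam * s / (x*z)) ^ (lam * ((k:ℝ)*γ)) *
  ((1-lam) * s / y) ^ ((1-lam) * ((k:ℝ)*γ)) *
  (pgen d k z / (d:ℝ)) ^ γ

open Real Set

/-!
Weighted AM-GM removes `ω` from `Ψ`, and the resulting bound is continuous in `lam` up to and
including the endpoints. Put `Q = kγ` and `ρ = lam / (1 - lam)`. Evaluating the bound at `x = ts`,
`y = s`, `z = c` with `tc = ρ`, and using the subadditivity of `u ↦ u ^ γ`, reduces the strict
inequality to
`(1 + (d - 1) q(ts)/q(s)) ((1 + c)^Q + (d - 1) |1 - c/(d - 1)|^Q) < d (1 + ρ)^Q`.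
Equality holds for `t = 1`, `c = d - 1`, that is at `lam = 1 - 1/d`; away from this point a
compactness argument turns strictness into a uniform gap.

Since `q` is log-concave, `q(ts)/q(s) ≤ G := exp ((t - 1) Q)`, so that `t = 1 + log G / Q`.
Stationarity of the quotient of the two sides in `t` along `tc = ρ` suggests `c = (d - 1) G`. For
fixed `G` and `c` the inequality becomes weaker as `Q` grows, so for `d = 4` it is enough to prove
one-variable inequalities, at `Q = 7` when `G` is not too small and at `Q = -(7/3) log G` otherwise.
The remaining, extreme, values of `ρ` admit crude choices of `t` and `c`.
-/

section RealInequalities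

lemma one_add_div_rpow_le_one_add_div_rpow {x p r : ℝ} (hp : 0 < p) (hpr : p ≤ r) (hx : -p ≤ x) :
    (1 + x / p) ^ p ≤ (1 + x / r) ^ r := by
  have hr : 0 < r := hp.trans_le hpr
  have hxr : -1 ≤ x / r := by rw [le_div_iff₀ hr]; linarith
  have bernoulli : 1 + x / p ≤ (1 + x / r) ^ (r / p) := by
    convert one_add_mul_self_le_rpow_one_add hxr ((one_le_div hp).2 hpr) using 2
    field_simp
  have hxp : 0 ≤ 1 + x / p := by
    have : -1 ≤ x / p := by rw [le_div_iff₀ hp]; linarith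
    linarith
  calc (1 + x / p) ^ p ≤ ((1 + x / r) ^ (r / p)) ^ p := by gcongr
    _ = (1 + x / r) ^ r := by rw [← rpow_mul (by linarith), div_mul_cancel₀ _ hp.ne']

lemma one_add_rpow_le_exp_mul {x r : ℝ} (hx : -1 ≤ x) (hr : 0 ≤ r) : (1 + x) ^ r ≤ exp (x * r) := by
  rw [exp_mul]
  exact rpow_le_rpow (by linarith) (by linarith [add_one_le_exp x]) hr

lemma exp_mul_sub_one_le {θ : ℝ} (hθ₀ : 0 ≤ θ) (hθ₁ : θ ≤ 1) (x : ℝ) :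
    exp (θ * x) - 1 ≤ θ * (exp x - 1) := by
  have h := convexOn_exp.2 (mem_univ x) (mem_univ 0) hθ₀ (sub_nonneg.2 hθ₁) (by ring)
  simp only [smul_eq_mul, mul_zero, add_zero, exp_zero, mul_one] at h
  linarith

lemma le_tangent_of_concaveOn {S : Set ℝ} {f : ℝ → ℝ} {f' x y : ℝ} (hf : ConcaveOn ℝ S f)
    (hx : x ∈ S) (hy : y ∈ S) (hf' : HasDerivAt f f' x) : f y ≤ f x + f' * (y - x) := by
  rcases lt_trichotomy x y with hxy | rfl | hyx
  · have h := hf.slope_le_of_hasDerivAt hx hy hxy hf'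
    rw [slope_def_field, div_le_iff₀ (sub_pos.2 hxy)] at h
    linarith
  · simp
  · have h := hf.le_slope_of_hasDerivAt hy hx hyx hf'
    rw [slope_def_field, le_div_iff₀ (sub_pos.2 hyx)] at h
    linarith

lemma negMulLog_le_exp_neg_add {x : ℝ} (hx : 0 < x) (a : ℝ) :
    negMulLog x ≤ exp (-a) + (a - 1) * x := by
  have h := add_one_le_exp (-a - log x)
  rw [exp_sub, exp_log hx, le_div_iff₀ hx] at h
  rw [negMulLog]
  linarith

lemma negMulLog_one_sub_le {v : ℝ} (hv : v < 1) :
    negMulLog (1 - v) ≤ v - v ^ 2 / 2 - v ^ 3 / 6 := by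
  have hf (u : ℝ) (hu : u ∈ Iio 1) :
      HasDerivAt (fun u => negMulLog (1 - u) - (u - u ^ 2 / 2 - u ^ 3 / 6))
        (log (1 - u) + u + u ^ 2 / 2) u := by
    refine (((hasDerivAt_negMulLog (sub_pos.2 hu).ne').comp u
      ((hasDerivAt_id' u).const_sub 1)).sub (((hasDerivAt_id' u).sub
        ((hasDerivAt_pow 2 u).div_const 2)).sub ((hasDerivAt_pow 3 u).div_const 6))).congr_deriv ?_
    norm_num
    ring
  have hf' (u : ℝ) (hu : u ∈ Iio 1) :
      HasDerivAt (fun u => log (1 - u) + u + u ^ 2 / 2) (-u ^ 2 / (1 - u)) u := by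
    have hu' : 1 - u ≠ 0 := (sub_pos.2 hu).ne'
    refine (((((hasDerivAt_id' u).const_sub 1).log hu').add (hasDerivAt_id' u)).add
      ((hasDerivAt_pow 2 u).div_const 2)).congr_deriv ?_
    norm_num
    field_simp
    ring
  have hconc : ConcaveOn ℝ (Iio 1) fun u : ℝ => negMulLog (1 - u) - (u - u ^ 2 / 2 - u ^ 3 / 6) :=
    concaveOn_of_hasDerivWithinAt2_nonpos (convex_Iio 1)
      (fun u hu => (hf u hu).continuousAt.continuousWithinAt)
      (fun u hu => (hf u (interior_subset hu)).hasDerivWithinAt)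
      (fun u hu => (hf' u (interior_subset hu)).hasDerivWithinAt)
      (fun u hu => div_nonpos_of_nonpos_of_nonneg (by nlinarith [sq_nonneg u])
        (sub_nonneg.2 (mem_Iio.1 (interior_subset hu)).le))
  have h₀ : (0 : ℝ) ∈ Iio 1 := by simp
  have h := le_tangent_of_concaveOn hconc h₀ hv (hf 0 h₀)
  norm_num at h
  linarith

end RealInequalities

section Topology

lemma exists_pos_lt_of_continuous {f : ℝ → ℝ} (hf : Continuous f) {b : ℝ} (h₀ : f 0 < b) :
    ∃ e > 0, f e < b :=
  ((hf.continuousWithinAt.eventually (gt_mem_nhds h₀)).and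
    (self_mem_nhdsWithin (s := Ioi 0))).exists.imp fun _ h => h.symm

lemma exists_lt_forall_exists_lt_of_isCompact {X ι : Type*} [TopologicalSpace X] {K : Set X}
    (hK : IsCompact K) {f : ι → X → ℝ} (hf : ∀ i, ContinuousOn (f i) K) {b : ℝ}
    (hb : ∀ x ∈ K, ∃ i, f i x < b) : ∃ m < b, ∀ x ∈ K, ∃ i, f i x < m := by
  refine hK.induction_on (p := fun S => ∃ m < b, ∀ x ∈ S, ∃ i, f i x < m) ?_ ?_ ?_ ?_
  · exact ⟨b - 1, by linarith, by simp⟩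
  · rintro S T hST ⟨m, hm, hT⟩
    exact ⟨m, hm, fun x hx => hT x (hST hx)⟩
  · rintro S T ⟨m, hm, hS⟩ ⟨n, hn, hT⟩
    refine ⟨max m n, max_lt hm hn, ?_⟩
    rintro x (hx | hx)
    · exact (hS x hx).imp fun _ h => lt_max_of_lt_left h
    · exact (hT x hx).imp fun _ h => lt_max_of_lt_right h
  · intro x hx
    obtain ⟨i, hi⟩ := hb x hx
    obtain ⟨m, him, hmb⟩ := exists_between hi
    exact ⟨_, (hf i x hx).eventually (gt_mem_nhds him), m, hmb, fun y hy => ⟨i, hy⟩⟩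

end Topology

section QFunction

lemma q_zero : q 0 = 0 := by simp [q]

lemma q_nonneg (x : ℝ) : 0 ≤ q x := by
  have := add_one_le_exp x
  rw [q]
  linarith

lemma q_pos {x : ℝ} (hx : x ≠ 0) : 0 < q x := by
  have := add_one_lt_exp hx
  rw [q]
  linarith

@[fun_prop]
lemma continuous_q : Continuous q := by
  unfold q
  fun_prop

lemma hasDerivAt_q (x : ℝ) : HasDerivAt q (exp x - 1) x :=
  ((hasDerivAt_exp x).sub (hasDerivAt_id' x)).sub_const 1

lemma q_mul_le_sq_mul {θ : ℝ} (hθ₀ : 0 ≤ θ) (hθ₁ : θ ≤ 1) {x : ℝ} (hx : 0 ≤ x) :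
    q (θ * x) ≤ θ ^ 2 * q x := by
  have hderiv (y : ℝ) : HasDerivAt (fun y => θ ^ 2 * q y - q (θ * y))
      (θ * (θ * (exp y - 1) - (exp (θ * y) - 1))) y :=
    (((hasDerivAt_q y).const_mul (θ ^ 2)).sub ((hasDerivAt_q (θ * y)).comp y
      ((hasDerivAt_id' y).const_mul θ))).congr_deriv (by ring)
  have hmono : Monotone fun y => θ ^ 2 * q y - q (θ * y) :=
    monotone_of_hasDerivAt_nonneg hderiv fun y =>
      mul_nonneg hθ₀ (sub_nonneg.2 (exp_mul_sub_one_le hθ₀ hθ₁ y))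
  have h := hmono hx
  simp only [mul_zero, q_zero, sub_zero] at h
  linarith

lemma antitoneOn_div_q : AntitoneOn (fun x => x / q x) (Ioi 0) := by
  intro x hx y hy hxy
  rw [mem_Ioi] at hx hy
  have hθ₁ : x / y ≤ 1 := (div_le_one hy).2 hxy
  have h := q_mul_le_sq_mul (by positivity) hθ₁ hy.le
  rw [div_mul_cancel₀ _ hy.ne'] at h
  have hq : q x ≤ x / y * q y := h.trans <| by
    gcongr
    · exact q_nonneg y
    · exact pow_le_of_le_one (by positivity) hθ₁ two_ne_zero
  rw [div_le_div_iff₀ (q_pos hy.ne') (q_pos hx.ne')]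
  calc y * q x ≤ y * (x / y * q y) := by gcongr
    _ = x * q y := by field_simp

lemma hasDerivAt_log_q {x : ℝ} (hx : x ≠ 0) :
    HasDerivAt (fun x => log (q x)) (1 + x / q x) x := by
  convert (hasDerivAt_q x).log (q_pos hx).ne' using 1
  have := (q_pos hx).ne'
  field_simp
  rw [q]
  ring

lemma concaveOn_log_q : ConcaveOn ℝ (Ioi 0) fun x => log (q x) := by
  refine AntitoneOn.concaveOn_of_deriv (convex_Ioi 0)
    (fun x hx => (hasDerivAt_log_q (ne_of_gt hx)).continuousAt.continuousWithinAt)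
    (fun x hx => ?_) ?_
  · rw [interior_Ioi] at hx
    exact (hasDerivAt_log_q (ne_of_gt hx)).differentiableAt.differentiableWithinAt
  · rw [interior_Ioi]
    refine (antitoneOn_div_q.const_add 1).congr fun x hx => ?_
    exact (hasDerivAt_log_q (ne_of_gt hx)).deriv.symm

lemma Qf_eq_mul_one_add_div_q {s : ℝ} (hs : s ≠ 0) : Qf s = s * (1 + s / q s) := by
  have := (q_pos hs).ne'
  rw [Qf, ← q]
  field_simp
  rw [q]
  ring

lemma le_Qf {s : ℝ} (hs : 0 < s) : s ≤ Qf s := by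
  have : 0 ≤ s / q s := div_nonneg hs.le (q_nonneg s)
  rw [Qf_eq_mul_one_add_div_q hs.ne']
  nlinarith

lemma q_mul_div_q_le_exp {s t : ℝ} (hs : 0 < s) (ht : 0 < t) :
    q (t * s) / q s ≤ exp ((t - 1) * Qf s) := by
  have hts : 0 < t * s := mul_pos ht hs
  have tangent : log (q (t * s)) ≤ log (q s) + (1 + s / q s) * (t * s - s) :=
    le_tangent_of_concaveOn concaveOn_log_q hs hts (hasDerivAt_log_q hs.ne')
  rw [← log_le_iff_le_exp (div_pos (q_pos hts.ne') (q_pos hs.ne')),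
    log_div (q_pos hts.ne').ne' (q_pos hs.ne').ne', Qf_eq_mul_one_add_div_q hs.ne']
  linarith

lemma q_le_sq {x : ℝ} (hx : x ≤ 3 / 2) : q x ≤ x ^ 2 := by
  rcases le_total x (-1) with hx₁ | hx₁
  · have : exp x ≤ 1 := exp_le_one_iff.2 (by linarith)
    rw [q]
    nlinarith
  rcases le_total x 0 with hx₀ | hx₀
  · have h := le_of_abs_le (abs_exp_sub_one_sub_id_le (abs_le.2 ⟨hx₁, by linarith⟩))
    rw [q]
    linarith
  · have he : exp (3 / 2) ≤ 19 / 4 := by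
      rw [← pow_le_pow_iff_left₀ (exp_pos _).le (by norm_num) two_ne_zero, ← exp_nat_mul,
        show ((2 : ℕ) : ℝ) * (3 / 2) = (3 : ℕ) * 1 by norm_num, exp_nat_mul]
      exact (pow_le_pow_left₀ (exp_pos 1).le exp_one_lt_d9.le 3).trans (by norm_num)
    have h := q_mul_le_sq_mul (θ := x / (3 / 2)) (by positivity) (by linarith) (x := 3 / 2)
      (by norm_num)
    rw [div_mul_cancel₀ _ (by norm_num)] at h
    calc q x ≤ (x / (3 / 2)) ^ 2 * q (3 / 2) := h
      _ ≤ (x / (3 / 2)) ^ 2 * (9 / 4) := by gcongr; rw [q]; linarith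
      _ = x ^ 2 := by ring

end QFunction

section Reduction

/-- `d · p(z)` with the exponent `k` replaced by a real number `r` and the base `1 - z/(d-1)`,
which can be negative, by its absolute value. -/
noncomputable def absPgen (d : ℕ) (r z : ℝ) : ℝ :=
  (1 + z) ^ r + (d - 1) * |1 - z / (d - 1)| ^ r

/-- The upper bound for `sup_ω Ψ(ω, lam, x, y, z)` given by the weighted AM-GM inequality. The
factors `lam ^ (lam k γ)` and `(1 - lam) ^ ((1 - lam) k γ)` are collected in the entropy, which
makes the bound continuous on all of `0 ≤ lam ≤ 1`. -/
noncomputable def psiBound (d k : ℕ) (γ s lam x y z : ℝ) : ℝ :=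
  ((d - 1) * q x + q y) / q s *
    exp (k * γ * (lam * log (s / (x * z)) + (1 - lam) * log (s / y) - binEntropy lam)) *
    (absPgen d k z / d ^ 2) ^ γ

/-- The inequality certifying `psiBound < d ^ (1 - 2γ)` at `lam = ρ / (1 + ρ)`: the arguments used
there are `x = t s`, `y = s`, `z = c`, and `t c = ρ` turns the exponential in `psiBound` into
`(1 + ρ) ^ (-Q)`. -/
def HasTiltedBound (d : ℕ) (Q s ρ : ℝ) : Prop :=
  ∃ t c : ℝ, 0 < t ∧ 0 < c ∧ t * c = ρ ∧
    (1 + (d - 1) * (q (t * s) / q s)) * absPgen d Q c < d * (1 + ρ) ^ Q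

variable {d k : ℕ} {γ r s lam x y z : ℝ}

lemma one_le_natCast_sub_one (hd : 2 ≤ d) : (1 : ℝ) ≤ d - 1 := by
  have : (2 : ℝ) ≤ d := mod_cast hd
  linarith

lemma absPgen_nonneg (hd : 2 ≤ d) (hz : -1 ≤ z) : 0 ≤ absPgen d r z := by
  have := one_le_natCast_sub_one hd
  have : 0 ≤ 1 + z := by linarith
  unfold absPgen
  positivity

lemma continuous_absPgen (d : ℕ) (hr : 0 ≤ r) : Continuous (absPgen d r) := by
  unfold absPgen
  have hpow {f : ℝ → ℝ} (hf : Continuous f) : Continuous fun z => f z ^ r :=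
    hf.rpow_const fun _ => Or.inr hr
  exact (hpow (by fun_prop)).add (continuous_const.mul (hpow (by fun_prop)))

lemma absPgen_zero : absPgen d r 0 = d := by simp [absPgen]

lemma absPgen_sub_one (hd : 2 ≤ d) (hr : r ≠ 0) : absPgen d r (d - 1) = d ^ r := by
  have := one_le_natCast_sub_one hd
  simp [absPgen, div_self (by positivity : (d : ℝ) - 1 ≠ 0), zero_rpow hr]

lemma rpow_mul_absPgen_inv (hz : 0 < z) :
    z ^ r * absPgen d r z⁻¹ = (z + 1) ^ r + (d - 1) * |z - 1 / (d - 1)| ^ r := by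
  have h₁ : z ^ r * (1 + z⁻¹) ^ r = (z + 1) ^ r := by
    rw [← mul_rpow hz.le (by positivity)]
    field_simp
  have h₂ : z ^ r * |1 - z⁻¹ / (d - 1)| ^ r = |z - 1 / (d - 1)| ^ r := by
    rw [← mul_rpow hz.le (abs_nonneg _), ← abs_of_pos hz, ← abs_mul, abs_of_pos hz, mul_sub,
      mul_div_assoc', mul_inv_cancel₀ hz.ne', mul_one]
  rw [absPgen, mul_add, h₁, ← h₂]
  ring

lemma abs_pgen_div_le (hd : 2 ≤ d) (hz : 0 < z) : |pgen d k z / d| ≤ absPgen d k z / d ^ 2 := by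
  have hd₁ := one_le_natCast_sub_one hd
  have hsplit : pgen d k z / d = ((1 + z) ^ k + (d - 1) * (1 - z / (d - 1)) ^ k) / d ^ 2 := by
    rw [pgen]
    field_simp
  rw [hsplit, abs_div, abs_of_nonneg (by positivity : (0 : ℝ) ≤ d ^ 2)]
  gcongr
  refine (abs_add_le _ _).trans_eq ?_
  rw [abs_mul, abs_pow, abs_pow, abs_of_pos (by positivity : 0 < 1 + z),
    abs_of_pos (by positivity : (0 : ℝ) < d - 1), absPgen, rpow_natCast, rpow_natCast]

lemma absPgen_div_rpow_le (hd : 2 ≤ d) (hγ₀ : 0 ≤ γ) (hγ₁ : γ ≤ 1) (hz : 0 < z) :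
    (absPgen d k z / d ^ 2) ^ γ ≤ absPgen d (k * γ) z / (d ^ 2 : ℝ) ^ γ := by
  have hd₁ := one_le_natCast_sub_one hd
  rw [div_rpow (absPgen_nonneg hd (by linarith)) (by positivity)]
  gcongr
  have hz₁ : 0 ≤ 1 + z := by positivity
  calc absPgen d k z ^ γ
      ≤ ((1 + z) ^ (k : ℝ)) ^ γ + ((d - 1) * |1 - z / (d - 1)| ^ (k : ℝ)) ^ γ :=
        rpow_add_le_add_rpow (by positivity) (by positivity) hγ₀ hγ₁
    _ = (1 + z) ^ (k * γ) + (d - 1 : ℝ) ^ γ * |1 - z / (d - 1)| ^ (k * γ) := by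
        rw [mul_rpow (by positivity) (by positivity), ← rpow_mul hz₁, ← rpow_mul (abs_nonneg _)]
    _ ≤ absPgen d (k * γ) z := by
        rw [absPgen]
        gcongr
        exact rpow_le_self_of_one_le hd₁ hγ₁

lemma natCast_rpow_one_sub_two_mul (hd : d ≠ 0) (γ : ℝ) :
    (d : ℝ) ^ (1 - 2 * γ) = d / (d ^ 2 : ℝ) ^ γ := by
  rw [rpow_sub (by positivity), rpow_one, rpow_mul (by positivity), rpow_two]

lemma continuous_psiBound (d k : ℕ) (γ s x y z : ℝ) :
    Continuous fun lam => psiBound d k γ s lam x y z := by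
  unfold psiBound
  fun_prop

lemma rpow_mul_rpow_eq_exp_sub_binEntropy {a b Q : ℝ} (ha : 0 < a) (hb : 0 < b)
    (hlam : lam ∈ Ioo 0 1) :
    (lam * a) ^ (lam * Q) * ((1 - lam) * b) ^ ((1 - lam) * Q) =
      exp (Q * (lam * log a + (1 - lam) * log b - binEntropy lam)) := by
  have hlam₀ : 0 < lam := hlam.1
  have hlam₁ : 0 < 1 - lam := sub_pos.2 hlam.2
  rw [rpow_def_of_pos (by positivity), rpow_def_of_pos (by positivity), ← exp_add,
    log_mul hlam₀.ne' ha.ne', log_mul hlam₁.ne' hb.ne', binEntropy, log_inv, log_inv]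
  ring_nf

lemma Psi_le_psiBound (hd : 2 ≤ d) (hγ : 0 ≤ γ) (hs : 0 < s) (hx : 0 < x) (hy : 0 < y) (hz : 0 < z)
    (hlam : lam ∈ Ioo 0 1) {ω : ℝ} (hω : ω ∈ Ioo 0 1) :
    Psi d k γ s ω lam x y z ≤ psiBound d k γ s lam x y z := by
  have hω₀ : 0 < ω := hω.1
  have hω₁ : 0 < 1 - ω := sub_pos.2 hω.2
  have hd₁ := one_le_natCast_sub_one hd
  have hqs := q_pos hs.ne'
  have hqx := q_pos hx.ne'
  have hqy := q_pos hy.ne'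
  have amgm : ((d - 1) * q x / (q s * ω)) ^ ω * (q y / (q s * (1 - ω))) ^ (1 - ω) ≤
      ((d - 1) * q x + q y) / q s := by
    refine (geom_mean_le_arith_mean2_weighted hω₀.le hω₁.le (by positivity) (by positivity)
      (by ring)).trans_eq ?_
    field_simp
  have hp : (pgen d k z / d) ^ γ ≤ (absPgen d k z / d ^ 2) ^ γ :=
    (le_abs_self _).trans <| (abs_rpow_le_abs_rpow _ _).trans <|
      rpow_le_rpow (abs_nonneg _) (abs_pgen_div_le hd hz) hγ
  have hexp := rpow_mul_rpow_eq_exp_sub_binEntropy (Q := k * γ)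
    (by positivity : 0 < s / (x * z)) (by positivity : 0 < s / y) hlam
  rw [Psi, psiBound, mul_assoc (_ * _) _ (_ ^ ((1 - lam) * _)), mul_div_assoc lam,
    mul_div_assoc (1 - lam), hexp]
  refine (mul_le_mul_of_nonneg_left hp (by positivity)).trans ?_
  have := absPgen_nonneg (r := k) hd (by linarith : -1 ≤ z)
  gcongr

lemma psiBound_le_of_mul_eq (hd : 2 ≤ d) (hγ : γ ∈ Ioo 0 1) (hs : 0 < s) {t c : ℝ}
    (hc : 0 < c) (hlam : lam ∈ Ioo 0 1) (htc : t * c = lam / (1 - lam)) :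
    psiBound d k γ s lam (t * s) s c ≤
      (1 + (d - 1) * (q (t * s) / q s)) * absPgen d (k * γ) c /
        (1 + lam / (1 - lam)) ^ (k * γ) / (d ^ 2 : ℝ) ^ γ := by
  have hlam₀ : 0 < lam := hlam.1
  have hlam₁ : 0 < 1 - lam := sub_pos.2 hlam.2
  have hd₁ := one_le_natCast_sub_one hd
  have hqs := q_pos hs.ne'
  have hqt := q_nonneg (t * s)
  have hx : s / (t * s * c) = (1 - lam) / lam := by
    rw [mul_right_comm, htc]
    field_simp
  have hexp : exp (k * γ * (lam * log (s / (t * s * c)) + (1 - lam) * log (s / s) -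
      binEntropy lam)) = ((1 + lam / (1 - lam)) ^ (k * γ))⁻¹ := by
    rw [hx, div_self hs.ne', log_one, log_div hlam₁.ne' hlam₀.ne', binEntropy, log_inv, log_inv,
      show 1 + lam / (1 - lam) = (1 - lam)⁻¹ by field_simp; ring,
      rpow_def_of_pos (by positivity), ← exp_neg, log_inv]
    ring_nf
  have hq : ((d - 1) * q (t * s) + q s) / q s = 1 + (d - 1) * (q (t * s) / q s) := by
    field_simp
    ring
  rw [psiBound, hexp, hq]
  calc _ ≤ (1 + (d - 1) * (q (t * s) / q s)) * ((1 + lam / (1 - lam)) ^ (k * γ))⁻¹ *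
        (absPgen d (k * γ) c / (d ^ 2 : ℝ) ^ γ) := by
          gcongr
          exact absPgen_div_rpow_le hd hγ.1.le hγ.2.le hc
    _ = _ := by ring

lemma exists_psiBound_lt_of_hasTiltedBound (hd : 2 ≤ d) (hγ : γ ∈ Ioo 0 1) (hs : 0 < s)
    (hlam : lam ∈ Ioo 0 1) (h : HasTiltedBound d (k * γ) s (lam / (1 - lam))) :
    ∃ x y z, 0 < x ∧ 0 < y ∧ 0 < z ∧ psiBound d k γ s lam x y z < d ^ (1 - 2 * γ) := by
  obtain ⟨t, c, ht, hc, htc, hlt⟩ := h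
  refine ⟨t * s, s, c, by positivity, hs, hc,
    (psiBound_le_of_mul_eq hd hγ hs hc hlam htc).trans_lt ?_⟩
  have : 0 < lam / (1 - lam) := div_pos hlam.1 (sub_pos.2 hlam.2)
  rw [natCast_rpow_one_sub_two_mul (by positivity)]
  gcongr
  rwa [div_lt_iff₀ (by positivity)]

lemma psiBound_one_sub_inv_le (hd : 2 ≤ d) (hγ : γ ∈ Ioo 0 1) (hkγ : k * γ ≠ 0) (hs : 0 < s) :
    psiBound d k γ s (1 - 1 / d) s s (d - 1) ≤ d ^ (1 - 2 * γ) := by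
  have hd₁ := one_le_natCast_sub_one hd
  have hlam : (1 - 1 / d : ℝ) ∈ Ioo 0 1 := by
    have : (1 : ℝ) < d := by linarith
    constructor
    · rw [sub_pos, div_lt_one (by positivity)]
      exact this
    · have : (0 : ℝ) < 1 / d := by positivity
      linarith
  have hρ : (1 - 1 / d : ℝ) / (1 - (1 - 1 / d)) = d - 1 := by field_simp; ring
  have h := psiBound_le_of_mul_eq (k := k) hd hγ hs (by linarith : (0 : ℝ) < d - 1) hlam
    ((one_mul _).trans hρ.symm)
  rw [one_mul, hρ, absPgen_sub_one hd hkγ, div_self (q_pos hs.ne').ne', mul_one,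
    add_sub_cancel, mul_div_assoc, div_self (by positivity), mul_one] at h
  rwa [natCast_rpow_one_sub_two_mul (by positivity)]

lemma exists_psiBound_zero_lt (hd : 2 ≤ d) (hγ : γ ∈ Ioo 0 1) (hs : 0 < s) :
    ∃ x y z, 0 < x ∧ 0 < y ∧ 0 < z ∧ psiBound d k γ s 0 x y z < d ^ (1 - 2 * γ) := by
  have hd₁ : (1 : ℝ) < d := by linarith [one_le_natCast_sub_one hd]
  have hcont : Continuous fun e =>
      ((d - 1) * q e + q s) / q s * (absPgen d k e / d ^ 2) ^ γ :=
    Continuous.mul (by fun_prop) <|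
      ((continuous_absPgen d k.cast_nonneg).div_const _).rpow_const fun _ => Or.inr hγ.1.le
  have hlimit : ((d - 1) * q 0 + q s) / q s * (absPgen d k 0 / d ^ 2) ^ γ <
      (d : ℝ) ^ (1 - 2 * γ) := by
    have hexp : (d / d ^ 2 : ℝ) ^ γ = d ^ (-γ) := by
      rw [rpow_neg (by positivity), ← inv_rpow (by positivity)]
      field_simp
    rw [q_zero, mul_zero, zero_add, div_self (q_pos hs.ne').ne', one_mul, absPgen_zero, hexp]
    exact rpow_lt_rpow_of_exponent_lt hd₁ (by linarith [hγ.2])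
  obtain ⟨e, he, hlt⟩ := exists_pos_lt_of_continuous hcont hlimit
  refine ⟨e, s, e, he, hs, he, ?_⟩
  simpa [psiBound, hs.ne'] using hlt

lemma psiBound_one_le (hd : 2 ≤ d) (hγ : γ ∈ Ioo 0 1) (hs : 0 < s) {e : ℝ} (he : 0 < e) :
    psiBound d k γ s 1 s e e⁻¹ ≤
      ((d - 1) * q s + q e) / q s * ((e + 1) ^ (k * γ) + (d - 1) * |e - 1 / (d - 1)| ^ (k * γ)) /
        (d ^ 2 : ℝ) ^ γ := by
  have hd₁ := one_le_natCast_sub_one hd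
  have hqs := q_nonneg s
  have hqe := q_nonneg e
  have hexp : exp (k * γ * (1 * log (s / (s * e⁻¹)) + (1 - 1) * log (s / e) - binEntropy 1)) =
      e ^ (k * γ) := by
    rw [rpow_def_of_pos he, show s / (s * e⁻¹) = e by field_simp, binEntropy_one]
    ring_nf
  rw [psiBound, hexp, ← rpow_mul_absPgen_inv he]
  calc _ ≤ ((d - 1) * q s + q e) / q s * e ^ (k * γ) *
        (absPgen d (k * γ) e⁻¹ / (d ^ 2 : ℝ) ^ γ) := by
          gcongr
          exact absPgen_div_rpow_le hd hγ.1.le hγ.2.le (by positivity)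
    _ = _ := by ring

lemma exists_psiBound_one_lt (hd : 3 ≤ d) (hγ : γ ∈ Ioo 0 1) (hkγ : 2 < k * γ) (hs : 0 < s) :
    ∃ x y z, 0 < x ∧ 0 < y ∧ 0 < z ∧ psiBound d k γ s 1 x y z < d ^ (1 - 2 * γ) := by
  have hd₂ : (1 : ℝ) < d - 1 := by
    have : (3 : ℝ) ≤ d := mod_cast hd
    linarith
  have hpow {f : ℝ → ℝ} (hf : Continuous f) : Continuous fun z => f z ^ (k * γ) :=
    hf.rpow_const fun _ => Or.inr (by linarith)
  have hcont : Continuous fun e => ((d - 1) * q s + q e) / q s *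
      ((e + 1) ^ (k * γ) + (d - 1) * |e - 1 / (d - 1)| ^ (k * γ)) :=
    Continuous.mul (by fun_prop) <|
      (hpow (by fun_prop)).add (continuous_const.mul (hpow (by fun_prop)))
  have hlimit : ((d - 1) * q s + q 0) / q s *
      ((0 + 1) ^ (k * γ) + (d - 1) * |0 - 1 / (d - 1 : ℝ)| ^ (k * γ)) < d := by
    have hlt : (d - 1 : ℝ) ^ 2 < (d - 1) ^ (k * γ) := by
      rw [← rpow_two]
      exact rpow_lt_rpow_of_exponent_lt hd₂ hkγ
    have hlt' : (d - 1 : ℝ) * ((d - 1) * ((d - 1 : ℝ) ^ (k * γ))⁻¹) < 1 := by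
      rw [← mul_assoc, ← sq, ← div_eq_mul_inv, div_lt_one (by positivity)]
      exact hlt
    rw [q_zero, add_zero, mul_div_assoc, div_self (q_pos hs.ne').ne', zero_add, one_rpow, zero_sub,
      abs_neg, abs_of_pos (by positivity), one_div, inv_rpow (by positivity)]
    linarith
  obtain ⟨e, he, hlt⟩ := exists_pos_lt_of_continuous hcont hlimit
  refine ⟨s, e, e⁻¹, hs, he, inv_pos.2 he, (psiBound_one_le (by omega) hγ hs he).trans_lt ?_⟩
  rw [natCast_rpow_one_sub_two_mul (by omega)]
  gcongr

lemma exists_psiBound_lt (hd : 3 ≤ d) (hγ : γ ∈ Ioo 0 1) (hkγ : 2 < k * γ) (hs : 0 < s)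
    (h : ∀ ρ : ℝ, 0 < ρ → ρ ≠ d - 1 → HasTiltedBound d (k * γ) s ρ) (hlam : lam ∈ Icc 0 1)
    (hlam' : lam ≠ 1 - 1 / d) :
    ∃ x y z, 0 < x ∧ 0 < y ∧ 0 < z ∧ psiBound d k γ s lam x y z < d ^ (1 - 2 * γ) := by
  rcases hlam.1.eq_or_lt with rfl | hlam₀
  · exact exists_psiBound_zero_lt (by omega) hγ hs
  rcases hlam.2.eq_or_lt with rfl | hlam₁
  · exact exists_psiBound_one_lt hd hγ hkγ hs
  refine exists_psiBound_lt_of_hasTiltedBound (by omega) hγ hs ⟨hlam₀, hlam₁⟩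
    (h _ (div_pos hlam₀ (sub_pos.2 hlam₁)) fun heq => hlam' ?_)
  have := (sub_pos.2 hlam₁).ne'
  field_simp at heq ⊢
  linarith

theorem exists_psiBound_le (hd : 3 ≤ d) (hγ : γ ∈ Ioo 0 1) (hkγ : 2 < k * γ) (hs : 0 < s)
    (h : ∀ ρ : ℝ, 0 < ρ → ρ ≠ d - 1 → HasTiltedBound d (k * γ) s ρ) (hlam : lam ∈ Icc 0 1) :
    ∃ x y z, 0 < x ∧ 0 < y ∧ 0 < z ∧ psiBound d k γ s lam x y z ≤ d ^ (1 - 2 * γ) := by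
  by_cases hlam' : lam = 1 - 1 / d
  · subst hlam'
    have := one_le_natCast_sub_one (by omega : 2 ≤ d)
    exact ⟨s, s, d - 1, hs, hs, by linarith, psiBound_one_sub_inv_le (by omega) hγ (by linarith) hs⟩
  · obtain ⟨x, y, z, hx, hy, hz, hlt⟩ := exists_psiBound_lt hd hγ hkγ hs h hlam hlam'
    exact ⟨x, y, z, hx, hy, hz, hlt.le⟩

theorem exists_uniform_gap_psiBound (hd : 3 ≤ d) (hγ : γ ∈ Ioo 0 1) (hkγ : 2 < k * γ) (hs : 0 < s)
    (h : ∀ ρ : ℝ, 0 < ρ → ρ ≠ d - 1 → HasTiltedBound d (k * γ) s ρ) {ε : ℝ} (hε : 0 < ε) :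
    ∃ δ > 0, ∀ lam ∈ Icc (0 : ℝ) 1, ε ≤ |lam - (1 - 1 / d)| →
      ∃ x y z, 0 < x ∧ 0 < y ∧ 0 < z ∧ psiBound d k γ s lam x y z ≤ d ^ (1 - 2 * γ) - δ := by
  have hK : IsCompact (Icc 0 1 ∩ {lam : ℝ | ε ≤ |lam - (1 - 1 / d)|}) :=
    isCompact_Icc.inter_right (isClosed_le continuous_const (by fun_prop))
  obtain ⟨m, hm, hlt⟩ := exists_lt_forall_exists_lt_of_isCompact hK
    (f := fun (v : {v : ℝ × ℝ × ℝ // 0 < v.1 ∧ 0 < v.2.1 ∧ 0 < v.2.2}) lam =>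
      psiBound d k γ s lam v.1.1 v.1.2.1 v.1.2.2) (b := d ^ (1 - 2 * γ))
    (fun v => (continuous_psiBound ..).continuousOn) <| by
      rintro lam ⟨hlam, hdist⟩
      obtain ⟨x, y, z, hx, hy, hz, hlt⟩ := exists_psiBound_lt hd hγ hkγ hs h hlam <| by
        rintro rfl
        simp only [mem_ofPred_eq, sub_self, abs_zero] at hdist
        linarith
      exact ⟨⟨(x, y, z), hx, hy, hz⟩, hlt⟩
  refine ⟨d ^ (1 - 2 * γ) - m, sub_pos.2 hm, fun lam hlam hdist => ?_⟩
  obtain ⟨⟨⟨x, y, z⟩, hx, hy, hz⟩, hlt⟩ := hlt lam ⟨hlam, hdist⟩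
  exact ⟨x, y, z, hx, hy, hz, by linarith⟩

end Reduction

section TiltedInequality

/-- The inequality of `HasTiltedBound` with `q(ts)/q(s)` replaced by its bound
`G = exp ((t - 1) Q)` and `t` written as `1 + log G / Q`. -/
def TiltIneq (d : ℕ) (Q G c : ℝ) : Prop :=
  (1 + (d - 1) * G) * absPgen d Q c < d * (1 + (1 + log G / Q) * c) ^ Q

variable {d : ℕ} {Q G c : ℝ}

lemma absPgen_eq_rpow_mul (hc : -1 < c) (d : ℕ) (r : ℝ) :
    absPgen d r c = (1 + c) ^ r * (1 + (d - 1) * (|1 - c / (d - 1)| / (1 + c)) ^ r) := by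
  have hc₁ : 0 < 1 + c := by linarith
  rw [absPgen, div_rpow (abs_nonneg _) hc₁.le]
  field_simp

lemma tiltIneq_iff (hc : 0 < c) (hQ : 0 < Q) (hG : -Q ≤ log G) :
    TiltIneq d Q G c ↔ (1 + (d - 1) * G) * (1 + (d - 1) * (|1 - c / (d - 1)| / (1 + c)) ^ Q) <
      d * (1 + c / (1 + c) * log G / Q) ^ Q := by
  have hsplit : 1 + (1 + log G / Q) * c = (1 + c) * (1 + c / (1 + c) * log G / Q) := by
    field_simp
    ring
  have hnonneg : 0 ≤ 1 + c / (1 + c) * log G / Q := by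
    have hμ : c / (1 + c) ≤ 1 := (div_le_one (by positivity)).2 (by linarith)
    have : -1 ≤ c / (1 + c) * log G / Q := by
      rw [le_div_iff₀ hQ]
      nlinarith [show 0 < c / (1 + c) by positivity]
    linarith
  rw [TiltIneq, absPgen_eq_rpow_mul (by linarith), hsplit, mul_rpow (by positivity) hnonneg,
    mul_left_comm, mul_left_comm (d : ℝ), mul_lt_mul_iff_right₀ (by positivity)]

lemma abs_one_sub_div_div_one_add_le_one (hd : 2 ≤ d) (hc : 0 < c) :
    |1 - c / (d - 1)| / (1 + c) ≤ 1 := by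
  have hd₁ := one_le_natCast_sub_one hd
  have : c / (d - 1) ≤ c := div_le_self hc.le hd₁
  have : 0 < c / (d - 1) := by positivity
  rw [div_le_one (by positivity), abs_le]
  constructor <;> linarith

lemma tiltIneq_mono {p : ℝ} (hd : 2 ≤ d) (hp : 0 < p) (hpQ : p ≤ Q) (hc : 0 < c) (hG₀ : 0 ≤ G)
    (hG : -p ≤ log G) (h : TiltIneq d p G c) : TiltIneq d Q G c := by
  have hd₁ := one_le_natCast_sub_one hd
  -- Divided by `(1 + c) ^ Q`, the left side decreases in `Q` and the right side increases.
  rw [tiltIneq_iff hc hp hG] at h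
  rw [tiltIneq_iff hc (hp.trans_le hpQ) (by linarith)]
  have hx : -p ≤ c / (1 + c) * log G := by
    have hμ : c / (1 + c) ≤ 1 := (div_le_one (by positivity)).2 (by linarith)
    nlinarith [show 0 < c / (1 + c) by positivity]
  have hR : (|1 - c / (d - 1)| / (1 + c)) ^ Q ≤ (|1 - c / (d - 1)| / (1 + c)) ^ p :=
    rpow_le_rpow_of_exponent_ge' (by positivity) (abs_one_sub_div_div_one_add_le_one hd hc) hp.le
      hpQ
  calc _ ≤ (1 + (d - 1) * G) * (1 + (d - 1) * (|1 - c / (d - 1)| / (1 + c)) ^ p) := by gcongr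
    _ < _ := h
    _ ≤ _ := by
        gcongr
        exact one_add_div_rpow_le_one_add_div_rpow hp hpQ hx

lemma hasTiltedBound_of_tiltIneq (hd : 2 ≤ d) {s : ℝ} (hs : 0 < s) (hc : 0 < c) (hG : 0 < G)
    (hGQ : -Qf s < log G) (h : TiltIneq d (Qf s) G c) :
    HasTiltedBound d (Qf s) s ((1 + log G / Qf s) * c) := by
  have hd₁ := one_le_natCast_sub_one hd
  have hQ : 0 < Qf s := hs.trans_le (le_Qf hs)
  have ht : 0 < 1 + log G / Qf s := by
    have : -1 < log G / Qf s := by rwa [lt_div_iff₀ hQ, neg_one_mul]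
    linarith
  have hq : q ((1 + log G / Qf s) * s) / q s ≤ G := by
    have h := q_mul_div_q_le_exp hs ht
    rwa [add_sub_cancel_left, div_mul_cancel₀ _ hQ.ne', exp_log hG] at h
  refine ⟨_, c, ht, hc, rfl, lt_of_le_of_lt ?_ h⟩
  have := absPgen_nonneg (r := Qf s) hd (by linarith : -1 ≤ c)
  gcongr

lemma absPgen_le_add_sq {r z : ℝ} (hd : 2 ≤ d) (hr : 0 ≤ r) (hz₀ : 0 ≤ z) (hz : z ≤ d - 1)
    (hzr : z * r ≤ 3 / 2) : absPgen d r z ≤ d + d / (d - 1) * (z * r) ^ 2 := by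
  have hd₁ := one_le_natCast_sub_one hd
  have hz₁ : z / (d - 1) ≤ 1 := (div_le_one (by positivity)).2 hz
  have hsmall : -(z / (d - 1)) * r ≤ 3 / 2 := by
    have : 0 ≤ z / (d - 1) * r := by positivity
    linarith
  have hpos : (1 + z) ^ r ≤ exp (z * r) := one_add_rpow_le_exp_mul (by linarith) hr
  have hneg : |1 - z / (d - 1)| ^ r ≤ exp (-(z / (d - 1)) * r) := by
    rw [abs_of_nonneg (by linarith), sub_eq_add_neg]
    exact one_add_rpow_le_exp_mul (by linarith) hr
  calc absPgen d r z ≤ exp (z * r) + (d - 1) * exp (-(z / (d - 1)) * r) := by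
        rw [absPgen]
        gcongr
    _ = d + q (z * r) + (d - 1) * q (-(z / (d - 1)) * r) := by
        rw [q, q]
        field_simp
        ring
    _ ≤ d + (z * r) ^ 2 + (d - 1) * (-(z / (d - 1)) * r) ^ 2 := by
        gcongr
        · exact q_le_sq hzr
        · exact q_le_sq hsmall
    _ = d + d / (d - 1) * (z * r) ^ 2 := by
        field_simp
        ring

end TiltedInequality

section DomainSizeFour

variable {Q G E c θ ρ s : ℝ}

lemma tiltIneq_four_seven_iff :
    TiltIneq 4 7 G c ↔
      (1 + 3 * G) * ((1 + c) ^ 7 + 3 * |1 - c / 3| ^ 7) < 4 * (1 + (1 + log G / 7) * c) ^ 7 := by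
  have h : ((4 : ℕ) : ℝ) - 1 = 3 := by norm_num
  rw [TiltIneq, absPgen, h, rpow_ofNat, rpow_ofNat, rpow_ofNat, Nat.cast_ofNat]

lemma tiltIneq_four_seven_four_thirds (hc : 4 ≤ c) : TiltIneq 4 7 (4 / 3) c := by
  have hlog : 2 / 7 ≤ log (4 / 3) := by
    have h := le_log_one_add_of_nonneg (by norm_num : (0 : ℝ) ≤ 1 / 3)
    norm_num at h
    linarith
  have habs : |1 - c / 3| ≤ (1 + c) / 3 := abs_le.2 ⟨by linarith, by linarith⟩
  have hbase : 253 / 245 * (1 + c) ≤ 1 + (1 + log (4 / 3) / 7) * c := by nlinarith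
  rw [tiltIneq_four_seven_iff]
  calc (1 + 3 * (4 / 3)) * ((1 + c) ^ 7 + 3 * |1 - c / 3| ^ 7)
      ≤ (1 + 3 * (4 / 3)) * ((1 + c) ^ 7 + 3 * ((1 + c) / 3) ^ 7) := by gcongr
    _ = 5 * (1 + 1 / 3 ^ 6) * (1 + c) ^ 7 := by ring
    _ < 4 * (253 / 245) ^ 7 * (1 + c) ^ 7 :=
        mul_lt_mul_of_pos_right (by norm_num) (by positivity)
    _ = 4 * (253 / 245 * (1 + c)) ^ 7 := by ring
    _ ≤ 4 * (1 + (1 + log (4 / 3) / 7) * c) ^ 7 := by gcongr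

lemma tiltIneq_four_seven_three_mul {N : ℝ} (hN : negMulLog G ≤ N)
    (hN' : 3 * N ≤ 7 * (1 + 3 * G))
    (h : (1 + 3 * G) * ((1 + 3 * G) ^ 7 + 3 * |1 - G| ^ 7) < 4 * (1 + 3 * G - 3 * N / 7) ^ 7) :
    TiltIneq 4 7 G (3 * G) := by
  rw [negMulLog] at hN
  rw [tiltIneq_four_seven_iff, mul_div_cancel_left₀ _ three_ne_zero]
  refine h.trans_le ?_
  have : 0 ≤ 1 + 3 * G - 3 * N / 7 := by linarith
  gcongr
  linarith

lemma one_sub_pow_seven_ge {y : ℝ} (hy : y ≤ 1) :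
    1 - 7 * y + 21 * y ^ 2 - 35 * y ^ 3 ≤ (1 - y) ^ 7 := by
  have hfac : (1 - y) ^ 7 - (1 - 7 * y + 21 * y ^ 2 - 35 * y ^ 3) =
      y ^ 4 * (20 + 10 * (1 - y) + 4 * (1 - y) ^ 2 + (1 - y) ^ 3) := by ring
  have : 0 ≤ 1 - y := by linarith
  rw [← sub_nonneg, hfac]
  positivity

/- For `v = 1 - G`, this is `(4 - 3v)³ / v²` times the gap that the cubic bounds on `negMulLog` and
on `(1 - y)⁷` leave in the tilted inequality at `c = 3G`. -/
lemma tilt_near_one_polynomial_pos {v : ℝ} (hv₁ : -(1 / 3) ≤ v) (hv₂ : v ≤ 2 / 3) :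
    0 < (4 - 3 * v) ^ 2 * (2 * v - 3) + 108 / 7 * (1 - v / 2 - v ^ 2 / 6) ^ 2 * (4 - 3 * v) -
      540 / 49 * v * (1 - v / 2 - v ^ 2 / 6) ^ 3 - (4 - 3 * v) ^ 3 / 162 := by
  -- All coefficients in the Bernstein basis of `[-1/3, 2/3]` are positive.
  have bernstein (i j : ℕ) : 0 ≤ (v + 1 / 3) ^ i * (2 / 3 - v) ^ j :=
    mul_nonneg (pow_nonneg (by linarith) i) (pow_nonneg (by linarith) j)
  linarith [bernstein 0 7, bernstein 1 6, bernstein 2 5, bernstein 3 4, bernstein 4 3,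
    bernstein 5 2, bernstein 6 1, bernstein 7 0]

lemma tilt_near_one_normalized_lt {v A n : ℝ} (hv₁ : -(1 / 3) ≤ v) (hv₂ : v ≤ 2 / 3) (hv : v ≠ 0)
    (hA : A = 4 - 3 * v) (hn : n = 1 - v / 2 - v ^ 2 / 6) :
    A + 3 * A * |v / A| ^ 7 < 4 * (1 - 3 * (v * n) / 7 / A) ^ 7 := by
  have hA₂ : 2 ≤ A := by linarith
  have hy : 3 * (v * n) / 7 / A ≤ 1 := by
    rw [div_le_one (by positivity)]
    nlinarith
  have hdefect : 3 * A * |v / A| ^ 7 ≤ v ^ 2 / 162 := by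
    have hvA : |v / A| ≤ 1 / 3 := by
      rw [abs_div, abs_of_pos (by positivity : 0 < A), div_le_iff₀ (by positivity), abs_le]
      constructor <;> linarith
    calc 3 * A * |v / A| ^ 7 = 3 * A * (v / A) ^ 2 * |v / A| ^ 5 := by rw [← sq_abs (v / A)]; ring
      _ ≤ 3 * A * (v / A) ^ 2 * (1 / 3) ^ 5 := by gcongr
      _ = v ^ 2 / (81 * A) := by field_simp; norm_num
      _ ≤ v ^ 2 / 162 := by gcongr; linarith
  have hexpand : 4 * (1 - 7 * (3 * (v * n) / 7 / A) + 21 * (3 * (v * n) / 7 / A) ^ 2 -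
      35 * (3 * (v * n) / 7 / A) ^ 3) - A - v ^ 2 / 162 =
      v ^ 2 / A ^ 3 * (A ^ 2 * (2 * v - 3) + 108 / 7 * n ^ 2 * A - 540 / 49 * v * n ^ 3 -
        A ^ 3 / 162) := by
    have : 4 - 3 * v ≠ 0 := by linarith
    rw [hA, hn]
    field_simp
    ring
  have hpos : 0 < v ^ 2 / A ^ 3 * (A ^ 2 * (2 * v - 3) + 108 / 7 * n ^ 2 * A -
      540 / 49 * v * n ^ 3 - A ^ 3 / 162) := by
    have := tilt_near_one_polynomial_pos hv₁ hv₂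
    rw [← hA, ← hn] at this
    positivity
  linarith [one_sub_pow_seven_ge hy]

lemma tiltIneq_four_seven_of_one_third_le (hG₁ : 1 / 3 ≤ G) (hG₂ : G ≤ 4 / 3) (hG : G ≠ 1) :
    TiltIneq 4 7 G (3 * G) := by
  obtain ⟨v, rfl⟩ : ∃ v, G = 1 - v := ⟨1 - G, by ring⟩
  have hv : v ≠ 0 := by
    rintro rfl
    simp at hG
  obtain ⟨A, hA⟩ : ∃ A, A = 4 - 3 * v := ⟨_, rfl⟩
  obtain ⟨n, hn⟩ : ∃ n, n = 1 - v / 2 - v ^ 2 / 6 := ⟨_, rfl⟩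
  have hA₂ : 2 ≤ A := by linarith
  refine tiltIneq_four_seven_three_mul (N := v * n) ?_ (by nlinarith) ?_
  · rw [hn]
    linarith [negMulLog_one_sub_le (v := v) (by linarith)]
  rw [show 1 + 3 * (1 - v) = A by linarith, sub_sub_cancel]
  calc A * (A ^ 7 + 3 * |v| ^ 7) = A ^ 7 * (A + 3 * A * |v / A| ^ 7) := by
        rw [abs_div, abs_of_pos (by positivity : 0 < A)]
        field_simp
    _ < A ^ 7 * (4 * (1 - 3 * (v * n) / 7 / A) ^ 7) := by
        gcongr
        exact tilt_near_one_normalized_lt (by linarith) (by linarith) hv hA hn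
    _ = 4 * (A * (1 - 3 * (v * n) / 7 / A)) ^ 7 := by ring
    _ = 4 * (A - 3 * (v * n) / 7) ^ 7 := by rw [mul_sub, mul_div_cancel₀ _ (by positivity), mul_one]

lemma exp_neg_eight_fifths_le : exp (-(8 / 5)) ≤ 101 / 500 := by
  rw [exp_neg, inv_le_comm₀ (exp_pos _) (by norm_num),
    ← pow_le_pow_iff_left₀ (by norm_num) (exp_pos _).le (by norm_num : 5 ≠ 0), ← exp_nat_mul,
    show ((5 : ℕ) : ℝ) * (8 / 5) = (8 : ℕ) * 1 by norm_num, exp_nat_mul]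
  exact le_trans (by norm_num) (pow_le_pow_left₀ (by norm_num) exp_one_gt_d9.le 8)

lemma one_add_three_mul_pow_seven_lt {r : ℝ} (hr₁ : 1 / 3 ≤ r) (hr₂ : r ≤ 5 / 6) :
    1 + 3 * r ^ 7 < (1 - 303 / 3500) ^ 7 * (1 + 3 * r) := by
  have chord := (convexOn_pow 7).2 (by norm_num : (1 / 3 : ℝ) ∈ Ici 0)
    (by norm_num : (5 / 6 : ℝ) ∈ Ici 0) (by linarith : 0 ≤ 5 / 3 - 2 * r)
    (by linarith : 0 ≤ 2 * r - 2 / 3) (by ring)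
  simp only [smul_eq_mul] at chord
  rw [show (5 / 3 - 2 * r) * (1 / 3) + (2 * r - 2 / 3) * (5 / 6) = r by ring] at chord
  linarith

lemma tiltIneq_four_seven_of_le_one_third (hG₁ : 1 / 21 ≤ G) (hG₂ : G ≤ 1 / 3) :
    TiltIneq 4 7 G (3 * G) := by
  have hA : 0 < 1 + 3 * G := by linarith
  refine tiltIneq_four_seven_three_mul (N := 101 / 500 * (1 + 3 * G)) ?_ (by linarith) ?_
  · linarith [negMulLog_le_exp_neg_add (by linarith : 0 < G) (8 / 5), exp_neg_eight_fifths_le]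
  obtain ⟨r, hr⟩ : ∃ r, r = (1 - G) / (1 + 3 * G) := ⟨_, rfl⟩
  have hr₁ : 1 / 3 ≤ r := by rw [hr, le_div_iff₀ hA]; linarith
  have hr₂ : r ≤ 5 / 6 := by rw [hr, div_le_iff₀ hA]; linarith
  have hAr : (1 + 3 * G) * (1 + 3 * r) = 4 := by rw [hr]; field_simp; ring
  have h1G : 1 - G = r * (1 + 3 * G) := by rw [hr]; field_simp
  rw [abs_of_nonneg (by linarith), h1G]
  calc (1 + 3 * G) * ((1 + 3 * G) ^ 7 + 3 * (r * (1 + 3 * G)) ^ 7)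
      = (1 + 3 * G) ^ 8 * (1 + 3 * r ^ 7) := by ring
    _ < (1 + 3 * G) ^ 8 * ((1 - 303 / 3500) ^ 7 * (1 + 3 * r)) := by
        gcongr
        exact one_add_three_mul_pow_seven_lt hr₁ hr₂
    _ = (1 + 3 * G) * (1 + 3 * r) * ((1 - 303 / 3500) * (1 + 3 * G)) ^ 7 := by ring
    _ = 4 * (1 + 3 * G - 3 * (101 / 500 * (1 + 3 * G)) / 7) ^ 7 := by rw [hAr]; ring

lemma tilted_lt_of_small (hQ : 7 ≤ Q) (hE : 0 < E) (hQE : Q * E ≤ 7 / 20) (hθ₀ : 0 < θ)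
    (hθ₁ : θ ≤ 1) :
    (1 + 3 * (θ ^ 2 * E)) * absPgen 4 Q (3 * θ * E) < 4 * (1 + 4 / 7 * θ * (3 * θ * E)) ^ Q := by
  have hE₁ : E ≤ 1 / 20 := by nlinarith
  have hθE : θ * E ≤ E := by nlinarith
  have hθ2E : θ ^ 2 * E ≤ E := by nlinarith
  have habs : absPgen 4 Q (3 * θ * E) ≤ 4 + 4 / 3 * (3 * θ * E * Q) ^ 2 := by
    have h := absPgen_le_add_sq (d := 4) (r := Q) (z := 3 * θ * E) (by norm_num) (by linarith)
      (by positivity) (by norm_num; linarith) (by nlinarith)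
    norm_num at h ⊢
    exact h
  have bernoulli : 1 + Q * (4 / 7 * θ * (3 * θ * E)) ≤ (1 + 4 / 7 * θ * (3 * θ * E)) ^ Q :=
    one_add_mul_self_le_rpow_one_add (by linarith [show 0 < 4 / 7 * θ * (3 * θ * E) by positivity])
      (by linarith)
  have hlin : 1 + Q * E * Q * (1 + 3 * (θ ^ 2 * E)) < 4 / 7 * Q := by
    have : Q * E * Q * (1 + 3 * (θ ^ 2 * E)) ≤ 7 / 20 * Q * (23 / 20) := by
      gcongr
      linarith
    linarith
  calc _ ≤ (1 + 3 * (θ ^ 2 * E)) * (4 + 4 / 3 * (3 * θ * E * Q) ^ 2) := by gcongr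
    _ = 4 + 12 * (θ ^ 2 * E) * (1 + Q * E * Q * (1 + 3 * (θ ^ 2 * E))) := by ring
    _ < 4 + 12 * (θ ^ 2 * E) * (4 / 7 * Q) := by gcongr
    _ = 4 * (1 + Q * (4 / 7 * θ * (3 * θ * E))) := by ring
    _ ≤ _ := by gcongr

lemma exp_neg_three_le : exp (-3) ≤ 1 / 20 := by
  rw [exp_neg, one_div, inv_le_inv₀ (exp_pos _) (by norm_num),
    show (3 : ℝ) = (3 : ℕ) * 1 by norm_num, exp_nat_mul]
  exact le_trans (by norm_num) (pow_le_pow_left₀ (by norm_num) exp_one_gt_d9.le 3)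

lemma one_div_le_exp_neg_three : 1 / 21 ≤ exp (-3) := by
  rw [exp_neg, one_div, inv_le_inv₀ (by norm_num) (exp_pos _),
    show (3 : ℝ) = (3 : ℕ) * 1 by norm_num, exp_nat_mul]
  exact (pow_le_pow_left₀ (exp_pos 1).le exp_one_lt_d9.le 3).trans (by norm_num)

lemma mul_exp_neg_three_sevenths_mul_le (hQ : 7 ≤ Q) : Q * exp (-(3 / 7 * Q)) ≤ 7 / 20 := by
  have h : Q / 7 ≤ exp (3 / 7 * Q - 3) := by linarith [add_one_le_exp (3 / 7 * Q - 3)]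
  calc Q * exp (-(3 / 7 * Q)) ≤ 7 * exp (3 / 7 * Q - 3) * exp (-(3 / 7 * Q)) := by
        gcongr
        linarith
    _ = 7 * exp (-3) := by
        rw [mul_assoc, ← exp_add]
        ring_nf
    _ ≤ 7 / 20 := by linarith [exp_neg_three_le]

lemma tiltIneq_four_neg_seven_thirds_mul_log (hG : 0 < G) (hlog : log G ≤ -3) :
    TiltIneq 4 (-(7 / 3) * log G) G (3 * G) := by
  have hQG := mul_exp_neg_three_sevenths_mul_le (Q := -(7 / 3) * log G) (by linarith)
  rw [show -(3 / 7 * (-(7 / 3) * log G)) = log G by ring, exp_log hG] at hQG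
  have h := tilted_lt_of_small (θ := 1) (by linarith) hG hQG one_pos le_rfl
  have hlog' : log G / (-(7 / 3) * log G) = -(3 / 7) := by
    have : log G ≠ 0 := by linarith
    field_simp
  rw [TiltIneq, hlog']
  norm_num at h ⊢
  exact h

lemma tiltIneq_four_three_mul (hQ : 7 ≤ Q) (hG₁ : exp (-(3 / 7 * Q)) ≤ G) (hG₂ : G ≤ 4 / 3)
    (hG : G ≠ 1) : TiltIneq 4 Q G (3 * G) := by
  have hG₀ : 0 < G := (exp_pos _).trans_le hG₁
  have hlogQ : -(3 / 7 * Q) ≤ log G := (le_log_iff_exp_le hG₀).2 hG₁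
  rcases le_total (log G) (-3) with hlog | hlog
  · exact tiltIneq_mono (by norm_num) (by linarith) (by linarith) (by positivity) hG₀.le
      (by linarith) (tiltIneq_four_neg_seven_thirds_mul_log hG₀ hlog)
  · have hG₃ : 1 / 21 ≤ G := one_div_le_exp_neg_three.trans ((le_log_iff_exp_le hG₀).1 hlog)
    refine tiltIneq_mono (by norm_num) (by norm_num) hQ (by positivity) hG₀.le (by linarith) ?_
    rcases le_total G (1 / 3) with hG₄ | hG₄
    · exact tiltIneq_four_seven_of_le_one_third hG₃ hG₄
    · exact tiltIneq_four_seven_of_one_third_le hG₄ hG₂ hG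

lemma hasTiltedBound_four_of_ge (hs : 0 < s) (hQ : 7 ≤ Qf s)
    (hρ : (1 + log (4 / 3) / Qf s) * 4 ≤ ρ) : HasTiltedBound 4 (Qf s) s ρ := by
  have hlog : 0 < log (4 / 3) := log_pos (by norm_num)
  have ht : 0 < 1 + log (4 / 3) / Qf s := by positivity
  have hc : 4 ≤ ρ / (1 + log (4 / 3) / Qf s) := by rwa [le_div_iff₀' ht]
  have h := hasTiltedBound_of_tiltIneq (d := 4) (by norm_num) hs (by linarith) (by norm_num)
    (by linarith) (tiltIneq_mono (by norm_num) (by norm_num) hQ (by linarith) (by norm_num)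
      (by linarith) (tiltIneq_four_seven_four_thirds hc))
  rwa [mul_div_cancel₀ _ ht.ne'] at h

lemma hasTiltedBound_four_of_mem_Icc (hs : 0 < s) (hQ : 7 ≤ Qf s)
    (hρ : ρ ∈ Icc (12 / 7 * exp (-(3 / 7 * Qf s))) ((1 + log (4 / 3) / Qf s) * 4)) (hρ₃ : ρ ≠ 3) :
    HasTiltedBound 4 (Qf s) s ρ := by
  have hE : exp (-(3 / 7 * Qf s)) ≤ 4 / 3 := by
    have : exp (-(3 / 7 * Qf s)) ≤ 1 := exp_le_one_iff.2 (by linarith)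
    linarith
  have hcont : ContinuousOn (fun G => (1 + log G / Qf s) * (3 * G))
      (Icc (exp (-(3 / 7 * Qf s))) (4 / 3)) := by
    have hne : ∀ G ∈ Icc (exp (-(3 / 7 * Qf s))) (4 / 3), G ≠ 0 := fun G hG =>
      ((exp_pos _).trans_le hG.1).ne'
    fun_prop (disch := assumption)
  have hendpoint : (1 + log (exp (-(3 / 7 * Qf s))) / Qf s) * (3 * exp (-(3 / 7 * Qf s))) =
      12 / 7 * exp (-(3 / 7 * Qf s)) := by
    rw [log_exp]
    field_simp
    ring
  obtain ⟨G, hG, hGρ⟩ := intermediate_value_Icc hE hcont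
    (show ρ ∈ Icc _ _ from ⟨hendpoint.trans_le hρ.1, hρ.2.trans_eq (by ring)⟩)
  have hG₀ : 0 < G := (exp_pos _).trans_le hG.1
  have hlog : -(3 / 7 * Qf s) ≤ log G := (le_log_iff_exp_le hG₀).2 hG.1
  have hG₁ : G ≠ 1 := by
    rintro rfl
    exact hρ₃ (by rw [← hGρ]; simp)
  exact hGρ ▸ hasTiltedBound_of_tiltIneq (by norm_num) hs (by positivity) hG₀ (by linarith)
    (tiltIneq_four_three_mul hQ hG.1 hG.2 hG₁)

lemma hasTiltedBound_four_of_le (hs : 0 < s) (hQ : 7 ≤ Qf s) (hρ₀ : 0 < ρ)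
    (hρ : ρ ≤ 12 / 7 * exp (-(3 / 7 * Qf s))) : HasTiltedBound 4 (Qf s) s ρ := by
  obtain ⟨E, hE⟩ : ∃ E, E = exp (-(3 / 7 * Qf s)) := ⟨_, rfl⟩
  have hE₀ : 0 < E := hE ▸ exp_pos _
  have hqs := q_pos hs.ne'
  obtain ⟨θ, hθ₀, hθ₁, hθ⟩ : ∃ θ, 0 < θ ∧ θ ≤ 1 ∧ 12 / 7 * E * θ ^ 2 = ρ := by
    refine ⟨√(ρ / (12 / 7 * E)), by positivity, ?_, ?_⟩
    · rw [sqrt_le_one, div_le_one (by positivity), hE]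
      exact hρ
    · rw [sq_sqrt (by positivity)]
      field_simp
  have hq : q (4 / 7 * θ * s) / q s ≤ θ ^ 2 * E := by
    have hEq : q (4 / 7 * s) / q s ≤ E := by
      refine (q_mul_div_q_le_exp hs (by norm_num)).trans_eq ?_
      rw [hE]
      ring_nf
    rw [div_le_iff₀ hqs] at hEq ⊢
    calc q (4 / 7 * θ * s) = q (θ * (4 / 7 * s)) := by ring_nf
      _ ≤ θ ^ 2 * q (4 / 7 * s) := q_mul_le_sq_mul hθ₀.le hθ₁ (by positivity)
      _ ≤ θ ^ 2 * E * q s := by rw [mul_assoc]; gcongr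
  have htc : 4 / 7 * θ * (3 * θ * E) = ρ := by rw [← hθ]; ring
  refine ⟨4 / 7 * θ, 3 * θ * E, by positivity, by positivity, htc, ?_⟩
  have h := tilted_lt_of_small hQ hE₀ (hE ▸ mul_exp_neg_three_sevenths_mul_le hQ) hθ₀ hθ₁
  have hp := absPgen_nonneg (d := 4) (r := Qf s) (z := 3 * θ * E) (by norm_num)
    (by linarith [show 0 < 3 * θ * E by positivity])
  rw [← htc, show ((4 : ℕ) : ℝ) - 1 = 3 by norm_num, Nat.cast_ofNat]
  refine lt_of_le_of_lt ?_ h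
  gcongr

theorem hasTiltedBound_four (hs : 0 < s) (hQ : 7 ≤ Qf s) (hρ₀ : 0 < ρ) (hρ₃ : ρ ≠ 3) :
    HasTiltedBound 4 (Qf s) s ρ := by
  rcases le_total ρ (12 / 7 * exp (-(3 / 7 * Qf s))) with hρ | hρ
  · exact hasTiltedBound_four_of_le hs hQ hρ₀ hρ
  rcases le_total ρ ((1 + log (4 / 3) / Qf s) * 4) with hρ' | hρ'
  · exact hasTiltedBound_four_of_mem_Icc hs hQ ⟨hρ, hρ'⟩ hρ₃
  · exact hasTiltedBound_four_of_ge hs hQ hρ'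

end DomainSizeFour

theorem stmt16 (k : ℕ) (hk : 1 ≤ k) (γ : ℝ) (hγ : γ ∈ Set.Ioo (0:ℝ) 1)
    (hkγ : 2 < (k:ℝ) * γ) (s : ℝ) (hs : 0 < s) (hQs : Qf s = (k:ℝ) * γ)
    (hs7 : 7 ≤ s) :
    (∀ lam ∈ Set.Ioo (0:ℝ) 1,
      ∃ a b c : ℝ, 0 < a ∧ 0 < b ∧ 0 < c ∧
        ∀ ω ∈ Set.Ioo (0:ℝ) 1,
          Psi 4 k γ s ω lam a b c ≤ (4:ℝ) ^ (1 - 2*γ)) ∧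
    (∀ ε : ℝ, 0 < ε → ∃ δ : ℝ, 0 < δ ∧
      ∀ lam ∈ Set.Ioo (0:ℝ) 1, ε ≤ |lam - 3/4| →
        ∃ a b c : ℝ, 0 < a ∧ 0 < b ∧ 0 < c ∧
          ∀ ω ∈ Set.Ioo (0:ℝ) 1,
            Psi 4 k γ s ω lam a b c ≤ (4:ℝ) ^ (1 - 2*γ) - δ) := by
  have tilted (ρ : ℝ) (hρ₀ : 0 < ρ) (hρ : ρ ≠ (4 : ℕ) - 1) : HasTiltedBound 4 (k * γ) s ρ :=
    hQs ▸ hasTiltedBound_four hs (hs7.trans (le_Qf hs)) hρ₀ (by norm_num at hρ; exact hρ)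
  have hΨ {lam x y z : ℝ} (hlam : lam ∈ Ioo 0 1) (hx : 0 < x) (hy : 0 < y) (hz : 0 < z) {ω : ℝ}
      (hω : ω ∈ Ioo 0 1) : Psi 4 k γ s ω lam x y z ≤ psiBound 4 k γ s lam x y z :=
    Psi_le_psiBound (by norm_num) hγ.1.le hs hx hy hz hlam hω
  refine ⟨fun lam hlam => ?_, fun ε hε => ?_⟩
  · obtain ⟨x, y, z, hx, hy, hz, hle⟩ :=
      exists_psiBound_le (by norm_num) hγ hkγ hs tilted (Ioo_subset_Icc_self hlam)
    exact ⟨x, y, z, hx, hy, hz, fun ω hω => (hΨ hlam hx hy hz hω).trans (mod_cast hle)⟩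
  · obtain ⟨δ, hδ, hgap⟩ := exists_uniform_gap_psiBound (by norm_num) hγ hkγ hs tilted hε
    refine ⟨δ, hδ, fun lam hlam hdist => ?_⟩
    obtain ⟨x, y, z, hx, hy, hz, hle⟩ :=
      hgap lam (Ioo_subset_Icc_self hlam) (by norm_num at hdist ⊢; exact hdist)
    exact ⟨x, y, z, hx, hy, hz, fun ω hω => (hΨ hlam hx hy hz hω).trans (mod_cast hle)⟩
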